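/- Assume P does not lie on a median of ABC (a line joining a vertex to the midpoint of the opposite side). Let M = T_P ∘ K⁻¹ ∘ T_{P′} and V = PQ·P′Q′. Then M(O) = Q and M(O′) = Q′, the lines OQ and O′Q′ are distinct, and if M is a homothety then its unique fixed point S satisfies S = OQ·GV = OQ·O′Q′; that is, S lies on all three lines OQ, O′Q′ and GV. -/

import Mathlib

noncomputable section

/-- The real affine plane. -/
abbrev Pt : Type := ℝ × ℝ

/-- `u` and `v` are parallel vectors (the zero vector is parallel to everything). -/
def Par (u v : Pt) : Prop := ∃ t : ℝ, u = t • v ∨ v = t • u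

/-- The centroid of the triangle `ABC`. -/
def cent (A B C : Pt) : Pt := (3⁻¹ : ℝ) • (A + B + C)

/-- The homothety with center `Z` and ratio `r`. -/
def homoth (Z : Pt) (r : ℝ) (X : Pt) : Pt := Z + r • (X - Z)

/-- The value at `p` of the quadratic polynomial with coefficient vector `c`. -/
def qval (c : Fin 6 → ℝ) (p : Pt) : ℝ :=
  c 0 * p.1 ^ 2 + c 1 * p.1 * p.2 + c 2 * p.2 ^ 2 + c 3 * p.1 + c 4 * p.2 + c 5

/-- `S` is a conic: the zero locus of a real polynomial of total degree 2. -/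
def IsConic (S : Set Pt) : Prop :=
  ∃ c : Fin 6 → ℝ, ¬(c 0 = 0 ∧ c 1 = 0 ∧ c 2 = 0) ∧ S = {p | qval c p = 0}

/-- `Z` is a center of symmetry of `S`. -/
def IsCenterOf (Z : Pt) (S : Set Pt) : Prop :=
  ∀ p ∈ S, (2 : ℝ) • Z - p ∈ S

/-- The gradient at `p` of the quadratic polynomial with coefficients `c`. -/
def qgrad (c : Fin 6 → ℝ) (p : Pt) : Pt :=
  (2 * c 0 * p.1 + c 1 * p.2 + c 3, c 1 * p.1 + 2 * c 2 * p.2 + c 4)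

/-- The line through `X` and `Y`. -/
def lineThru (X Y : Pt) : Set Pt := {p | ∃ t : ℝ, p = X + t • (Y - X)}

/-- `L` is the tangent line at the nonsingular point `p` of the conic with coefficients `c`. -/
def IsTangentLineAt (c : Fin 6 → ℝ) (L : Set Pt) (p : Pt) : Prop :=
  qval c p = 0 ∧ qgrad c p ≠ 0 ∧
  L = {q | (qgrad c p).1 * (q.1 - p.1) + (qgrad c p).2 * (q.2 - p.2) = 0}

/-- The cross product of two plane vectors. -/
def cross (u v : Pt) : ℝ := u.1 * v.2 - u.2 * v.1

theorem cross_eq_zero_of_par {u v : Pt} (h : Par u v) : cross u v = 0 := by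
  obtain ⟨t, rfl | rfl⟩ := h <;> simp only [cross, Prod.smul_fst, Prod.smul_snd, smul_eq_mul] <;> ring

theorem eq_of_cross_eq_zero {u v X Y : Pt} (huv : cross u v ≠ 0)
    (hu : cross (X - Y) u = 0) (hv : cross (X - Y) v = 0) : X = Y := by
  simp only [cross, Prod.fst_sub, Prod.snd_sub] at *
  ext
  · apply mul_left_cancel₀ huv
    linear_combination u.1 * hv - v.1 * hu
  · apply mul_left_cancel₀ huv
    linear_combination u.2 * hv - v.2 * hu

theorem cross_eq_zero_of_collinear {X Y Z : Pt} (h : Collinear ℝ {X, Y, Z}) :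
    cross (Z - X) (Y - X) = 0 := by
  obtain ⟨v, hv⟩ := (collinear_iff_of_mem (p₀ := X) (by simp)).1 h
  obtain ⟨s, rfl⟩ := hv Y (by simp)
  obtain ⟨t, rfl⟩ := hv Z (by simp)
  simp [cross]
  ring

theorem cross_ne_zero_of_affineIndependent {A B C : Pt}
    (h : AffineIndependent ℝ ![A, B, C]) : cross (B - A) (C - A) ≠ 0 := by
  intro h0
  rw [affineIndependent_iff_not_collinear_set] at h
  apply h
  by_cases hBA : B = A
  · subst hBA
    simpa using collinear_pair ℝ B C
  rw [collinear_iff_of_mem (p₀ := A) (by simp)]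
  refine ⟨B - A, ?_⟩
  have hne : B - A ≠ 0 := sub_ne_zero.2 hBA
  have hC : ∃ r : ℝ, C = r • (B - A) +ᵥ A := by
    simp only [cross, Prod.fst_sub, Prod.snd_sub] at h0
    by_cases h1 : B.1 - A.1 = 0
    · have h2 : B.2 - A.2 ≠ 0 := fun h2 => hne (Prod.ext h1 h2)
      refine ⟨(C.2 - A.2) / (B.2 - A.2), Prod.ext ?_ ?_⟩ <;> simp <;> field_simp
      · linear_combination -h0
      · ring
    · refine ⟨(C.1 - A.1) / (B.1 - A.1), Prod.ext ?_ ?_⟩ <;> simp <;> field_simp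
      · ring
      · linear_combination h0
  rintro p (rfl | rfl | rfl)
  · exact ⟨0, by simp⟩
  · exact ⟨1, by simp⟩
  · exact hC

/-- Barycentric coefficients of the zero vector vanish. -/
theorem coeff_eq_zero {A B C : Pt} (h : cross (B - A) (C - A) ≠ 0) {a b c : ℝ}
    (hs : a + b + c = 0) (h0 : a • A + b • B + c • C = 0) : a = 0 ∧ b = 0 ∧ c = 0 := by
  have h1 := congrArg Prod.fst h0
  have h2 := congrArg Prod.snd h0
  simp only [cross, Prod.fst_sub, Prod.snd_sub, Prod.fst_add, Prod.snd_add, Prod.smul_fst,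
    Prod.smul_snd, smul_eq_mul, Prod.fst_zero, Prod.snd_zero] at *
  obtain rfl : a = -b - c := by linear_combination hs
  have hb : b = 0 := by
    apply mul_left_cancel₀ h
    linear_combination (C.2 - A.2) * h1 - (C.1 - A.1) * h2
  have hc : c = 0 := by
    apply mul_left_cancel₀ h
    linear_combination (B.1 - A.1) * h2 - (B.2 - A.2) * h1
  simp [hb, hc]

theorem exists_barycentric {A B C : Pt} (h : cross (B - A) (C - A) ≠ 0) (X : Pt) :
    ∃ a b c : ℝ, a + b + c = 1 ∧ X = a • A + b • B + c • C := by
  refine ⟨1 - cross (X - A) (C - A) / cross (B - A) (C - A)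
    - cross (B - A) (X - A) / cross (B - A) (C - A),
    cross (X - A) (C - A) / cross (B - A) (C - A),
    cross (B - A) (X - A) / cross (B - A) (C - A), by ring, ?_⟩
  ext <;> simp only [Prod.fst_add, Prod.snd_add, Prod.smul_fst, Prod.smul_snd, smul_eq_mul] <;>
    field_simp <;> simp only [cross, Prod.fst_sub, Prod.snd_sub] <;> ring

/-- Barycentric form of collinearity. -/
theorem det_eq_zero_of_collinear {A B C : Pt} (h : cross (B - A) (C - A) ≠ 0)
    {a b c a' b' c' a'' b'' c'' : ℝ} (hs : a + b + c = 1) (hs' : a' + b' + c' = 1)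
    (hs'' : a'' + b'' + c'' = 1)
    (hcol : Collinear ℝ {a • A + b • B + c • C, a' • A + b' • B + c' • C,
      a'' • A + b'' • B + c'' • C}) :
    (b * c' - c * b') * a'' + (c * a' - a * c') * b'' + (a * b' - b * a') * c'' = 0 := by
  have h1 := cross_eq_zero_of_collinear hcol
  apply mul_left_cancel₀ h
  obtain rfl : a = 1 - b - c := by linear_combination hs
  obtain rfl : a' = 1 - b' - c' := by linear_combination hs'
  obtain rfl : a'' = 1 - b'' - c'' := by linear_combination hs''
  simp only [cross, Prod.fst_sub, Prod.snd_sub, Prod.fst_add, Prod.snd_add, Prod.smul_fst,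
    Prod.smul_snd, smul_eq_mul] at *
  linear_combination -h1

/-- The trace on `BC` of a point with barycentric coordinates proportional to `(· : b : c)`. -/
theorem trace_eq {A B C P D : Pt} (h : cross (B - A) (C - A) ≠ 0) {x y z b c : ℝ}
    (hs : x + y + z = 1) (hP : P = x • A + y • B + z • C) (hyz : y + z ≠ 0)
    (hbc : b + c = 1) (hprop : b * z = c * y)
    (hD : Collinear ℝ {A, P, D} ∧ Collinear ℝ {B, C, D}) : D = b • B + c • C := by
  have h1 := cross_eq_zero_of_collinear hD.1
  have h2 := cross_eq_zero_of_collinear hD.2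
  obtain rfl : x = 1 - y - z := by linear_combination hs
  obtain rfl : b = 1 - c := by linear_combination hbc
  subst hP
  have hne : cross ((1 - y - z) • A + y • B + z • C - A) (C - B) ≠ 0 := by
    convert mul_ne_zero hyz h using 1
    simp only [cross, Prod.fst_sub, Prod.snd_sub, Prod.fst_add, Prod.snd_add, Prod.smul_fst,
      Prod.smul_snd, smul_eq_mul]
    ring
  refine eq_of_cross_eq_zero hne ?_ ?_ <;>
    simp only [cross, Prod.fst_sub, Prod.snd_sub, Prod.fst_add, Prod.snd_add, Prod.smul_fst,
      Prod.smul_snd, smul_eq_mul] at *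
  · linear_combination h1 - ((B.1 - A.1) * (C.2 - A.2) - (B.2 - A.2) * (C.1 - A.1)) * hprop
  · linear_combination h2

theorem affineEquiv_barycentric (T : Pt ≃ᵃ[ℝ] Pt) {A B C : Pt} {a b c : ℝ} (hs : a + b + c = 1) :
    T (a • A + b • B + c • C) = a • T A + b • T B + c • T C := by
  obtain rfl : a = 1 - b - c := by linear_combination hs
  have e : (1 - b - c) • A + b • B + c • C = (b • (B - A) + c • (C - A)) +ᵥ A := by
    simp only [vadd_eq_add]; module
  rw [e, T.map_vadd]
  have hB : T.linear (B - A) = T B - T A := by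
    simpa using (T.toAffineMap.linearMap_vsub B A)
  have hC : T.linear (C - A) = T C - T A := by
    simpa using (T.toAffineMap.linearMap_vsub C A)
  rw [map_add, map_smul, map_smul, hB, hC, vadd_eq_add]
  module

/-- The map composed of the two cevian maps and the anticomplement has scalar linear part. -/
theorem cevian_comp_eq {A B C : Pt} (h : cross (B - A) (C - A) ≠ 0) {x y z : ℝ}
    (hp : y + z ≠ 0) (hq : x + z ≠ 0) (hs : x + y ≠ 0) {T T' : Pt ≃ᵃ[ℝ] Pt}
    (hA : T A = (y / (y + z)) • B + (z / (y + z)) • C)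
    (hB : T B = (x / (x + z)) • A + (z / (x + z)) • C)
    (hC : T C = (x / (x + y)) • A + (y / (x + y)) • B)
    (hA' : T' A = (z / (y + z)) • B + (y / (y + z)) • C)
    (hB' : T' B = (z / (x + z)) • A + (x / (x + z)) • C)
    (hC' : T' C = (y / (x + y)) • A + (x / (x + y)) • B) (X : Pt) :
    T (homoth (cent A B C) (-2) (T' X)) =
      (-(4 * x * y * z / ((y + z) * (x + z) * (x + y)))) • X +
        ((x * (y + z) / ((x + z) * (x + y))) • A + (y * (x + z) / ((y + z) * (x + y))) • B +
          (z * (x + y) / ((y + z) * (x + z))) • C) := by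
  obtain ⟨a, b, c, habc, rfl⟩ := exists_barycentric h X
  obtain rfl : a = 1 - b - c := by linear_combination habc
  have e : homoth (cent A B C) (-2) (T' ((1 - b - c) • A + b • B + c • C)) =
      (1 - 2 * (b * (z / (x + z)) + c * (y / (x + y)))) • A +
      (1 - 2 * ((1 - b - c) * (z / (y + z)) + c * (x / (x + y)))) • B +
      (1 - 2 * ((1 - b - c) * (y / (y + z)) + b * (x / (x + z)))) • C := by
    rw [affineEquiv_barycentric T' (by ring), hA', hB', hC', homoth, cent]
    match_scalars <;> field_simp <;> ring
  rw [e, affineEquiv_barycentric T (by field_simp; ring), hA, hB, hC]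
  match_scalars <;> field_simp <;> ring

/-- If `O` lies on the parallel to `QD` through `m`, and `X ↦ r • X + w` maps `m` to the line `QD`,
then it maps `O` to the line `QD`. -/
theorem cross_image_eq_zero {O m D Q w : Pt} {r t : ℝ} (h : Par (m - O) (D - Q))
    (hm : r • m + w - Q = t • (D - Q)) : cross (r • O + w - Q) (D - Q) = 0 := by
  have h1 := cross_eq_zero_of_par h
  have e : r • O + w - Q = t • (D - Q) - r • (m - O) := by rw [← hm]; module
  rw [e]
  simp only [cross, Prod.fst_sub, Prod.snd_sub, Prod.smul_fst, Prod.smul_snd, smul_eq_mul] at *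
  linear_combination -r * h1

theorem midpoint_eq_half_smul (X Y : Pt) : midpoint ℝ X Y = (1 / 2 : ℝ) • (X + Y) := by
  rw [midpoint_eq_smul_add, invOf_eq_inv, one_div]

theorem mem_lineThru_of_homoth_eq {S X Y : Pt} {r : ℝ} (hr : r ≠ 1) (h : homoth S r X = Y) :
    S ∈ lineThru X Y := by
  have h1 : 1 - r ≠ 0 := sub_ne_zero.2 hr.symm
  refine ⟨1 / (1 - r), ?_⟩
  rw [← h, homoth]
  match_scalars <;> field_simp <;> ring

/-- A polynomial of degree at most two with three distinct roots has zero constant term. -/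
theorem const_eq_zero_of_three_roots {k μ ν x y z : ℝ} (hxy : x ≠ y) (hyz : y ≠ z) (hxz : x ≠ z)
    (hx : k + μ * x + ν * x ^ 2 = 0) (hy : k + μ * y + ν * y ^ 2 = 0)
    (hz : k + μ * z + ν * z ^ 2 = 0) : k = 0 := by
  have h1 : μ + ν * (x + y) = 0 := by
    apply mul_left_cancel₀ (sub_ne_zero.2 hxy)
    linear_combination hx - hy
  have h2 : μ + ν * (y + z) = 0 := by
    apply mul_left_cancel₀ (sub_ne_zero.2 hyz)
    linear_combination hy - hz
  have hν : ν = 0 := by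
    apply mul_left_cancel₀ (sub_ne_zero.2 hxz)
    linear_combination h1 - h2
  subst hν
  linear_combination hx - x * h1

theorem fixed_point_of_M
    (A B C P P' Q Q' D E F D₃ E₃ F₃ : Pt) (x y z : ℝ)
    (hABC : AffineIndependent ℝ ![A, B, C])
    (hsum : x + y + z = 1)
    (hPco : P = x • A + y • B + z • C)
    (hx0 : x ≠ 0) (hy0 : y ≠ 0) (hz0 : z ≠ 0)
    (hx1 : x ≠ 1) (hy1 : y ≠ 1) (hz1 : z ≠ 1)
    (hst : x * y + y * z + z * x ≠ 0)
    (hP' : P' = (y * z / (x * y + y * z + z * x)) • A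
        + (x * z / (x * y + y * z + z * x)) • B
        + (x * y / (x * y + y * z + z * x)) • C)
    (hQ : Q = homoth (cent A B C) (-(1 / 2)) P')
    (hQ' : Q' = homoth (cent A B C) (-(1 / 2)) P)
    (hD : Collinear ℝ {A, P, D} ∧ Collinear ℝ {B, C, D})
    (hE : Collinear ℝ {B, P, E} ∧ Collinear ℝ {A, C, E})
    (hF : Collinear ℝ {C, P, F} ∧ Collinear ℝ {A, B, F})
    (hD₃ : Collinear ℝ {A, P', D₃} ∧ Collinear ℝ {B, C, D₃})
    (hE₃ : Collinear ℝ {B, P', E₃} ∧ Collinear ℝ {A, C, E₃})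
    (hF₃ : Collinear ℝ {C, P', F₃} ∧ Collinear ℝ {A, B, F₃})
    (hxy : x ≠ y) (hyz : y ≠ z) (hxz : x ≠ z)
    (TP : Pt ≃ᵃ[ℝ] Pt) (hTP : TP A = D ∧ TP B = E ∧ TP C = F)
    (TP' : Pt ≃ᵃ[ℝ] Pt) (hTP' : TP' A = D₃ ∧ TP' B = E₃ ∧ TP' C = F₃)
    (O H : Pt)
    (hO : Par (midpoint ℝ B C - O) (D - Q) ∧ Par (midpoint ℝ C A - O) (E - Q) ∧
          Par (midpoint ℝ A B - O) (F - Q))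
    (hH : Par (H - A) (D - Q) ∧ Par (H - B) (E - Q) ∧ Par (H - C) (F - Q))
    (O' H' : Pt)
    (hO' : Par (midpoint ℝ B C - O') (D₃ - Q') ∧ Par (midpoint ℝ C A - O') (E₃ - Q') ∧
           Par (midpoint ℝ A B - O') (F₃ - Q'))
    (hH' : Par (H' - A) (D₃ - Q') ∧ Par (H' - B) (E₃ - Q') ∧ Par (H' - C) (F₃ - Q'))
    (V : Pt) (hV : Collinear ℝ {P, Q, V} ∧ Collinear ℝ {P', Q', V}) :
    TP (homoth (cent A B C) (-2) (TP' O)) = Q ∧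
    TP (homoth (cent A B C) (-2) (TP' O')) = Q' ∧
    O ≠ Q ∧ O' ≠ Q' ∧ lineThru O Q ≠ lineThru O' Q' ∧
    (∀ (S : Pt) (r : ℝ), r ≠ 0 → r ≠ 1 →
      (∀ X : Pt, TP (homoth (cent A B C) (-2) (TP' X)) = homoth S r X) →
      S ∈ lineThru O Q ∧ S ∈ lineThru O' Q' ∧ S ∈ lineThru (cent A B C) V) := by
  have hΔ := cross_ne_zero_of_affineIndependent hABC
  have hΔB : cross (A - B) (C - B) ≠ 0 := by
    convert neg_ne_zero.2 hΔ using 1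
    simp only [cross, Prod.fst_sub, Prod.snd_sub]; ring
  have hΔC : cross (A - C) (B - C) ≠ 0 := by
    convert hΔ using 1
    simp only [cross, Prod.fst_sub, Prod.snd_sub]; ring
  have hp : y + z ≠ 0 := fun h => hx1 (by linear_combination hsum - h)
  have hq : x + z ≠ 0 := fun h => hy1 (by linear_combination hsum - h)
  have hs : x + y ≠ 0 := fun h => hz1 (by linear_combination hsum - h)
  set σ := x * y + y * z + z * x with hσ
  clear_value σ
  have hD := trace_eq (b := y / (y + z)) (c := z / (y + z)) hΔ hsum hPco hp
    (by field_simp) (by ring) hD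
  have hE := trace_eq (x := y) (y := x) (z := z) (b := x / (x + z)) (c := z / (x + z)) hΔB
    (by linear_combination hsum) (by rw [hPco]; module) hq (by field_simp) (by ring) hE
  have hF := trace_eq (x := z) (y := x) (z := y) (b := x / (x + y)) (c := y / (x + y)) hΔC
    (by linear_combination hsum) (by rw [hPco]; module) hs (by field_simp) (by ring) hF
  have hsum' : y * z / σ + x * z / σ + x * y / σ = 1 := by field_simp; rw [hσ]; ring
  have hp' : x * z / σ + x * y / σ ≠ 0 := by
    rw [← add_div, ← mul_add, add_comm z]; exact div_ne_zero (mul_ne_zero hx0 hp) hst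
  have hq' : y * z / σ + x * y / σ ≠ 0 := by
    rw [← add_div, show y * z + x * y = y * (x + z) by ring]
    exact div_ne_zero (mul_ne_zero hy0 hq) hst
  have hs' : y * z / σ + x * z / σ ≠ 0 := by
    rw [← add_div, show y * z + x * z = z * (x + y) by ring]
    exact div_ne_zero (mul_ne_zero hz0 hs) hst
  have hD₃ := trace_eq (b := z / (y + z)) (c := y / (y + z)) hΔ hsum' hP' hp'
    (by field_simp; ring) (by ring) hD₃
  have hE₃ := trace_eq (x := x * z / σ) (y := y * z / σ) (z := x * y / σ)
    (b := z / (x + z)) (c := x / (x + z)) hΔB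
    (by linear_combination hsum') (by rw [hP']; module) hq' (by field_simp; ring) (by ring) hE₃
  have hF₃ := trace_eq (x := x * y / σ) (y := y * z / σ) (z := x * z / σ)
    (b := y / (x + y)) (c := x / (x + y)) hΔC
    (by linear_combination hsum') (by rw [hP']; module) hs' (by field_simp; ring) (by ring) hF₃
  have hM := cevian_comp_eq (T := TP) (T' := TP') hΔ hp hq hs (hTP.1.trans hD)
    (hTP.2.1.trans hE) (hTP.2.2.trans hF) (hTP'.1.trans hD₃) (hTP'.2.1.trans hE₃)
    (hTP'.2.2.trans hF₃)
  simp only [hM]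
  replace hQ : Q = (x * (y + z) / (2 * σ)) • A + (y * (x + z) / (2 * σ)) • B +
      (z * (x + y) / (2 * σ)) • C := by
    rw [hQ, hP', homoth, cent]
    match_scalars <;> field_simp <;> rw [hσ] <;> ring
  replace hQ' : Q' = ((y + z) / 2) • A + ((x + z) / 2) • B + ((x + y) / 2) • C := by
    rw [hQ', hPco, homoth, cent]
    match_scalars <;> linear_combination (-1 / 2) * hsum
  set r := -(4 * x * y * z / ((y + z) * (x + z) * (x + y))) with hr
  have hr0 : r ≠ 0 := by
    rw [hr]
    exact neg_ne_zero.2 (div_ne_zero (by simp [hx0, hy0, hz0]) (by simp [hp, hq, hs]))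
  set w := (x * (y + z) / ((x + z) * (x + y))) • A + (y * (x + z) / ((y + z) * (x + y))) • B +
          (z * (x + y) / ((y + z) * (x + z))) • C with hw
  clear_value r w
  have hMO : r • O + w = Q := by
    have hDE : cross (D - Q) (E - Q) ≠ 0 := by
      have : cross (D - Q) (E - Q) =
          x * y * z ^ 2 / ((y + z) * (x + z) * σ) * cross (B - A) (C - A) := by
        rw [hD, hE, hQ]
        simp only [cross, Prod.fst_sub, Prod.snd_sub, Prod.fst_add, Prod.snd_add, Prod.smul_fst,
          Prod.smul_snd, smul_eq_mul]
        field_simp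
        rw [hσ]
        ring
      rw [this]
      exact mul_ne_zero (div_ne_zero (by simp [hx0, hy0, hz0]) (by simp [hp, hq, hst])) hΔ
    refine eq_of_cross_eq_zero hDE
      (cross_image_eq_zero (t := 1 - 2 * σ / ((x + z) * (x + y))) hO.1 ?_)
      (cross_image_eq_zero (t := 1 - 2 * σ / ((y + z) * (x + y))) hO.2.1 ?_)
    · rw [midpoint_eq_half_smul, hD, hQ, hw, hr]
      match_scalars <;> field_simp <;> rw [hσ] <;> ring
    · rw [midpoint_eq_half_smul, hE, hQ, hw, hr]
      match_scalars <;> field_simp <;> rw [hσ] <;> ring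
  have hMO' : r • O' + w = Q' := by
    obtain rfl : z = 1 - x - y := by linear_combination hsum
    have hDE : cross (D₃ - Q') (E₃ - Q') ≠ 0 := by
      have : cross (D₃ - Q') (E₃ - Q') =
          x * y * (1 - x - y) / ((y + (1 - x - y)) * (x + (1 - x - y))) *
            cross (B - A) (C - A) := by
        rw [hD₃, hE₃, hQ']
        simp only [cross, Prod.fst_sub, Prod.snd_sub, Prod.fst_add, Prod.snd_add, Prod.smul_fst,
          Prod.smul_snd, smul_eq_mul]
        field_simp
        ring
      rw [this]
      exact mul_ne_zero (div_ne_zero (mul_ne_zero (mul_ne_zero hx0 hy0) hz0)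
        (mul_ne_zero hp hq)) hΔ
    refine eq_of_cross_eq_zero hDE
      (cross_image_eq_zero (t := 1 - 2 * x / ((x + (1 - x - y)) * (x + y))) hO'.1 ?_)
      (cross_image_eq_zero (t := 1 - 2 * y / ((y + (1 - x - y)) * (x + y))) hO'.2.1 ?_)
    · rw [midpoint_eq_half_smul, hD₃, hQ', hw, hr]
      match_scalars <;> field_simp <;> ring
    · rw [midpoint_eq_half_smul, hE₃, hQ', hw, hr]
      match_scalars <;> field_simp <;> ring
  have hQsum : x * (y + z) / (2 * σ) + y * (x + z) / (2 * σ) + z * (x + y) / (2 * σ) = 1 := by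
    field_simp
    rw [hσ]
    ring
  have hwsum : x * (y + z) / ((x + z) * (x + y)) + y * (x + z) / ((y + z) * (x + y)) +
      z * (x + y) / ((y + z) * (x + z)) = 1 - r := by
    rw [hr]
    field_simp
    ring
  refine ⟨hMO, hMO', ?_, ?_, ?_, ?_⟩
  · intro h
    rw [h] at hMO
    obtain ⟨ha, hb, -⟩ := coeff_eq_zero hΔ
      (a := (r - 1) * (x * (y + z) / (2 * σ)) + x * (y + z) / ((x + z) * (x + y)))
      (b := (r - 1) * (y * (x + z) / (2 * σ)) + y * (x + z) / ((y + z) * (x + y)))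
      (c := (r - 1) * (z * (x + y) / (2 * σ)) + z * (x + y) / ((y + z) * (x + z)))
      (by linear_combination (r - 1) * hQsum + hwsum) (by
        rw [← sub_eq_zero] at hMO
        rw [← hMO, hw, hQ]
        module)
    have h1 : (r - 1) * ((x + z) * (x + y)) + 2 * σ = 0 := by
      apply mul_left_cancel₀ (mul_ne_zero hx0 hp)
      field_simp at ha
      linear_combination ha
    have h2 : (r - 1) * ((y + z) * (x + y)) + 2 * σ = 0 := by
      apply mul_left_cancel₀ (mul_ne_zero hy0 hq)
      field_simp at hb
      linear_combination hb
    have h3 : r - 1 ≠ 0 := by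
      intro h3
      rw [h3] at h1
      exact hst (by linear_combination h1 / 2)
    exact mul_ne_zero (mul_ne_zero h3 hs) (sub_ne_zero.2 hxy) (by linear_combination h1 - h2)
  · intro h
    rw [h] at hMO'
    obtain ⟨ha, hb, -⟩ := coeff_eq_zero hΔ
      (a := (r - 1) * ((y + z) / 2) + x * (y + z) / ((x + z) * (x + y)))
      (b := (r - 1) * ((x + z) / 2) + y * (x + z) / ((y + z) * (x + y)))
      (c := (r - 1) * ((x + y) / 2) + z * (x + y) / ((y + z) * (x + z)))
      (by linear_combination (r - 1) * hsum + hwsum) (by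
        rw [← sub_eq_zero] at hMO'
        rw [← hMO', hw, hQ']
        module)
    have h1 : (r - 1) * ((x + z) * (x + y)) + 2 * x = 0 := by
      apply mul_left_cancel₀ hp
      field_simp at ha
      linear_combination ha
    have h2 : (r - 1) * ((y + z) * (x + y)) + 2 * y = 0 := by
      apply mul_left_cancel₀ hq
      field_simp at hb
      linear_combination hb
    exact mul_ne_zero hz0 (sub_ne_zero.2 hxy)
      (by linear_combination (y + z) / 2 * h1 - (x + z) / 2 * h2)
  · intro h
    have hmem : Q' ∈ lineThru O Q := by
      rw [h]
      exact ⟨1, by module⟩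
    obtain ⟨t, ht⟩ := hmem
    obtain ⟨ha, hb, hc⟩ := coeff_eq_zero hΔ
      (a := r * ((y + z) / 2) - (1 + t * (r - 1)) * (x * (y + z) / (2 * σ)) +
        (1 - t) * (x * (y + z) / ((x + z) * (x + y))))
      (b := r * ((x + z) / 2) - (1 + t * (r - 1)) * (y * (x + z) / (2 * σ)) +
        (1 - t) * (y * (x + z) / ((y + z) * (x + y))))
      (c := r * ((x + y) / 2) - (1 + t * (r - 1)) * (z * (x + y) / (2 * σ)) +
        (1 - t) * (z * (x + y) / ((y + z) * (x + z))))
      (by linear_combination r * hsum - (1 + t * (r - 1)) * hQsum + (1 - t) * hwsum) (by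
        have e : r • Q' - (1 + t * (r - 1)) • Q + (1 - t) • w = 0 := by
          rw [ht, ← hMO]
          module
        rw [← e, hw, hQ, hQ']
        module)
    refine hr0 (const_eq_zero_of_three_roots hxy hyz hxz (k := r)
      (μ := -(1 + t * (r - 1)) / σ + 2 * (1 - t) / ((y + z) * (x + z) * (x + y)))
      (ν := -(2 * (1 - t)) / ((y + z) * (x + z) * (x + y))) ?_ ?_ ?_)
    · have e : x * (y + z) / ((x + z) * (x + y)) =
          (y + z) * (x - x ^ 2) / ((y + z) * (x + z) * (x + y)) := by
        rw [show x - x ^ 2 = x * (y + z) by linear_combination -x * hsum]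
        field_simp
      rw [e] at ha
      apply mul_left_cancel₀ hp
      linear_combination 2 * ha
    · have e : y * (x + z) / ((y + z) * (x + y)) =
          (x + z) * (y - y ^ 2) / ((y + z) * (x + z) * (x + y)) := by
        rw [show y - y ^ 2 = y * (x + z) by linear_combination -y * hsum]
        field_simp
      rw [e] at hb
      apply mul_left_cancel₀ hq
      linear_combination 2 * hb
    · have e : z * (x + y) / ((y + z) * (x + z)) =
          (x + y) * (z - z ^ 2) / ((y + z) * (x + z) * (x + y)) := by
        rw [show z - z ^ 2 = z * (x + y) by linear_combination -z * hsum]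
        field_simp
      rw [e] at hc
      apply mul_left_cancel₀ hs
      linear_combination 2 * hc
  intro S r' _ hr1' hS
  refine ⟨mem_lineThru_of_homoth_eq hr1' ((hS O).symm.trans hMO),
    mem_lineThru_of_homoth_eq hr1' ((hS O').symm.trans hMO'), ?_⟩
  obtain rfl : r' = r := by
    obtain ⟨h1, -, -⟩ := coeff_eq_zero hΔ (a := r' - r) (b := r - r') (c := 0) (by ring) (by
      have e : homoth S r' A - homoth S r' B - ((r • A + w) - (r • B + w)) = 0 := by
        rw [← hS, ← hS, sub_self]
      rw [← e, homoth, homoth]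
      module)
    linear_combination h1
  have hSw : (1 - r') • S = w := by
    have e := hS S
    rw [homoth, sub_self, smul_zero, add_zero] at e
    rw [sub_smul, one_smul]
    nth_rewrite 1 [← e]
    abel
  obtain ⟨a, b, c, habc, rfl⟩ := exists_barycentric hΔ V
  have hPQ := det_eq_zero_of_collinear hΔ hsum hQsum habc (by rw [← hPco, ← hQ]; exact hV.1)
  have hPQ' := det_eq_zero_of_collinear hΔ hsum' (a' := (y + z) / 2) (b' := (x + z) / 2)
    (c' := (x + y) / 2) (by linear_combination hsum) habc (by rw [← hP', ← hQ']; exact hV.2)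
  have h1 : y * z * (y - z) * a + z * x * (z - x) * b + x * y * (x - y) * c = 0 := by
    field_simp at hPQ
    linear_combination hPQ
  have h2 : x ^ 2 * (z - y) * a + y ^ 2 * (x - z) * b + z ^ 2 * (y - x) * c = 0 := by
    field_simp at hPQ'
    linear_combination hPQ'
  have hδ : (x - y) * (y - z) * (z - x) ≠ 0 :=
    mul_ne_zero (mul_ne_zero (sub_ne_zero.2 hxy) (sub_ne_zero.2 hyz)) (sub_ne_zero.2 hxz.symm)
  set v := x * (y ^ 2 + y * z + z ^ 2) + y * (z ^ 2 + z * x + x ^ 2) +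
    z * (x ^ 2 + x * y + y ^ 2) with hv
  have ha : v * a = x * (y ^ 2 + y * z + z ^ 2) := by
    apply mul_left_cancel₀ hδ
    linear_combination (y ^ 2 * (x - z) - z ^ 2 * (y - x)) * h1 +
      (x * y * (x - y) - z * x * (z - x)) * h2 +
      (x - y) * (y - z) * (z - x) * x * (y ^ 2 + y * z + z ^ 2) * habc
  have hb : v * b = y * (z ^ 2 + z * x + x ^ 2) := by
    apply mul_left_cancel₀ hδ
    linear_combination (z ^ 2 * (y - x) - x ^ 2 * (z - y)) * h1 +
      (y * z * (y - z) - x * y * (x - y)) * h2 +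
      (x - y) * (y - z) * (z - x) * y * (z ^ 2 + z * x + x ^ 2) * habc
  have hc : v * c = z * (x ^ 2 + x * y + y ^ 2) := by
    linear_combination v * habc - ha - hb
  obtain ⟨u, hu⟩ : ∃ u, u = v + 3 * (x * y * z) := ⟨_, rfl⟩
  have hπ : (y + z) * (x + z) * (x + y) * (1 - r') = u := by
    rw [hr, hu, hv]
    field_simp
    ring
  have hr1 : 1 - r' ≠ 0 := sub_ne_zero.2 hr1'.symm
  have hu0 : u ≠ 0 := by
    rw [← hπ]
    exact mul_ne_zero (mul_ne_zero (mul_ne_zero hp hq) hs) hr1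
  refine ⟨v / u, ?_⟩
  apply smul_right_injective Pt hr1
  have hr1π : 1 - r' = u / ((y + z) * (x + z) * (x + y)) := by
    rw [← hπ]
    field_simp
  simp only [hSw]
  rw [hw, hr1π, cent]
  match_scalars <;> field_simp
  · linear_combination -3 * ha - hu
  · linear_combination -3 * hb - hu
  · linear_combination -3 * hc - hu
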